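/- The set H_id = {(A,B) ∈ SL(2,ℝ)² : |tr A| > 2, |tr B| > 2, |tr AB| > 2, tr A · tr B · tr AB < 0} has exactly eight connected components, and any two distinct connected components of H_id have disjoint closures. Moreover, its subset {(A,B) : tr A > 2, tr B > 2, tr AB < −2} has exactly two connected components, and there is a matrix G ∈ GL(2,ℝ) with det G < 0 such that the map (A,B) ↦ (G A G⁻¹, G B G⁻¹) interchanges these two components. -/

import Mathlib

/-!
For `p = (A, B)` put `x = tr A`, `y = tr B`, `z = tr AB`, and consider `M = y A + x B`. The quadratic
form `v ↦ det (v, M v)` has discriminant `-4 (x² + y² - x y z)`, so it is definite whenever `x y z < 0`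
(`orient_mul_form_pos`). Its value at the first basis vector is the lower-left entry of `M`, called
`orient p`; it is a continuous function of `p` that does not vanish on `Hid`, nor on the closure of
`Hid`, since there `|x|, |y|, |z| ≥ 2` and `x y z` is still negative.

Hence the signs of `x`, `y` and `orient` cut `Hid` into eight open sets `sect i` with disjoint
closures. They are exchanged by `A ↦ -A`, `B ↦ -B` and conjugation by `diag(1, -1)`, which changes the
sign of `orient`, so that they are all connected as soon as one of them is. The one with
`x, y, orient > 0` is parametrized by `ℝ⁶` (`exists_param`): a rotation takes the eigenvector of `A`
for its eigenvalue `l > 1` to the first basis vector, so that `A` becomes upper triangular. Then the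
lower-left entry `s` of `B` has the sign of the definite form at the eigenvector, hence of `orient`; and
given `l > 1`, the upper right entry of `A`, `s > 0` and the traces `y > 2`, `z < -2`, the entries of `B`
are determined, the diagonal ones by two linear equations and the last one by `det B = 1`.
-/

open Matrix

noncomputable section

/-- `SL(2,ℝ)`. -/
abbrev SL2 := Matrix.SpecialLinearGroup (Fin 2) ℝ

/-- Operator norm of a `2 × 2` real matrix, induced by the Euclidean norm on `ℝ²`. -/
noncomputable def opNorm (A : Matrix (Fin 2) (Fin 2) ℝ) : ℝ :=
  ‖Matrix.toEuclideanCLM (𝕜 := ℝ) A‖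

/-- Trace of an element of `SL(2,ℝ)`. -/
def trace2 (A : SL2) : ℝ := Matrix.trace (A : Matrix (Fin 2) (Fin 2) ℝ)

/-- Topology on `SL(2,ℝ)` induced from the space of `2 × 2` real matrices. -/
instance : TopologicalSpace SL2 := instTopologicalSpaceSubtype

/-- The real projective line: quotient of `ℝ² ∖ {0}` by nonzero scalar multiplication. -/
abbrev P1 := Projectivization ℝ (Fin 2 → ℝ)

/-- The quotient topology on the real projective line. -/
instance : TopologicalSpace P1 := instTopologicalSpaceQuotient

/-- The projective action of `SL(2,ℝ)` on the real projective line. -/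
def projAct (A : SL2) : P1 → P1 :=
  Projectivization.map (Matrix.SpecialLinearGroup.toLin' A).toLinearMap
    (Matrix.SpecialLinearGroup.toLin' A).injective

/-- For a word `w = [i₁, …, iₙ]`, the product `A_{iₙ} ⋯ A_{i₁}`. -/
def wordProd {N : ℕ} (A : Fin N → SL2) (w : List (Fin N)) : SL2 :=
  (w.reverse.map A).prod

/-- Uniform hyperbolicity with respect to the full shift on `N` symbols:
every product of `n` matrices has operator norm at least `C·λⁿ`. -/
def UnifHyp {N : ℕ} (A : Fin N → SL2) : Prop :=
  ∃ C > (0:ℝ), ∃ lam > (1:ℝ), ∀ w : List (Fin N), w ≠ [] →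
    opNorm (wordProd A w : Matrix (Fin 2) (Fin 2) ℝ) ≥ C * lam ^ w.length

/-- Transitivity of the subshift of finite type given by the transition relation `T`:
any symbol can be joined to any other by an admissible word. -/
def TransitiveSubshift {N : ℕ} (T : Fin N → Fin N → Prop) : Prop :=
  ∀ α β : Fin N, ∃ w : List (Fin N), w ≠ [] ∧ w.Chain' T ∧
    w.head? = some α ∧ w.getLast? = some β

/-- Uniform hyperbolicity with respect to the subshift determined by the
transition relation `T`. -/
def UnifHypSub {N : ℕ} (T : Fin N → Fin N → Prop) (A : Fin N → SL2) : Prop :=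
  ∃ C > (0:ℝ), ∃ lam > (1:ℝ), ∀ w : List (Fin N), w ≠ [] → w.Chain' T →
    opNorm (wordProd A w : Matrix (Fin 2) (Fin 2) ℝ) ≥ C * lam ^ w.length

/-- For a word `w` in two letters (`true ↦ A`, `false ↦ B`), the corresponding
product of the matrices `A`, `B` (letters applied right-to-left). -/
def pairProd (A B : SL2) (w : List Bool) : SL2 :=
  (w.reverse.map fun b => if b then A else B).prod

/-- Uniform hyperbolicity of a pair `(A,B)` with respect to the full shift on two symbols. -/
def UnifHypPair (A B : SL2) : Prop :=
  ∃ C > (0:ℝ), ∃ lam > (1:ℝ), ∀ w : List Bool, w ≠ [] →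
    opNorm (pairProd A B w : Matrix (Fin 2) (Fin 2) ℝ) ≥ C * lam ^ w.length

/-- The hyperbolicity locus for the full shift on two symbols. -/
def UHpairs : Set (SL2 × SL2) := {p | UnifHypPair p.1 p.2}

/-- The set of pairs having an elliptic product. -/
def Epairs : Set (SL2 × SL2) :=
  {p | ∃ w : List Bool, w ≠ [] ∧ |trace2 (pairProd p.1 p.2 w)| < 2}

/-- An open interval in the projective line: a nonempty open connected subset
whose complement contains more than one point. -/
def IsOpenInterval (I : Set P1) : Prop :=
  IsOpen I ∧ IsConnected I ∧ Iᶜ.Nontrivial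

/-- `H₀`: pairs possessing a common strictly invariant open interval. -/
def H0 : Set (SL2 × SL2) :=
  {p | ∃ I : Set P1, IsOpenInterval I ∧
        projAct p.1 '' closure I ⊆ I ∧ projAct p.2 '' closure I ⊆ I}

/-- `H_id`: pairs with `|tr A| > 2`, `|tr B| > 2`, `|tr AB| > 2`, `tr A · tr B · tr AB < 0`. -/
def Hid : Set (SL2 × SL2) :=
  {p | 2 < |trace2 p.1| ∧ 2 < |trace2 p.2| ∧ 2 < |trace2 (p.1 * p.2)| ∧
       trace2 p.1 * trace2 p.2 * trace2 (p.1 * p.2) < 0}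

/-- `F₊(A,B) = (A, AB)`. -/
def Fplus (p : SL2 × SL2) : SL2 × SL2 := (p.1, p.1 * p.2)

/-- `F₋(A,B) = (BA, B)`. -/
def Fminus (p : SL2 × SL2) : SL2 × SL2 := (p.2 * p.1, p.2)

/-- `applySeq [ε₁, …, ε_k] = F_{ε_k} ∘ ⋯ ∘ F_{ε₁}`, where `true` stands for `+`
and `false` for `−`. -/
def applySeq (s : List Bool) (p : SL2 × SL2) : SL2 × SL2 :=
  s.foldl (fun q e => if e then Fplus q else Fminus q) p

/-- A pair `(A,B)` is free if `|tr A| ≥ 2`, `|tr B| ≥ 2`, `|tr AB| ≥ 2` and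
`tr A · tr B · tr AB < 0`. -/
def FreePair (p : SL2 × SL2) : Prop :=
  2 ≤ |trace2 p.1| ∧ 2 ≤ |trace2 p.2| ∧ 2 ≤ |trace2 (p.1 * p.2)| ∧
    trace2 p.1 * trace2 p.2 * trace2 (p.1 * p.2) < 0

/-- A pair is straight if it lies in the closure of `H₀`. -/
def Straight (p : SL2 × SL2) : Prop := p ∈ closure H0

/-- A pair `(A,B)` is twisted if `|tr A| ≥ 2`, `|tr B| ≥ 2` and it is not straight. -/
def Twisted (p : SL2 × SL2) : Prop :=
  2 ≤ |trace2 p.1| ∧ 2 ≤ |trace2 p.2| ∧ ¬ Straight p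

/-- A pair is almost hyperbolic if every image of it under the monoid generated by
`F₊`, `F₋` consists of two non-elliptic matrices. -/
def AlmostHyperbolic (p : SL2 × SL2) : Prop :=
  ∀ s : List Bool, 2 ≤ |trace2 (applySeq s p).1| ∧ 2 ≤ |trace2 (applySeq s p).2|

/-- Group-hyperbolicity of a pair: exponential growth over all reduced words
in the free group on two generators (`true ↦ A`, `false ↦ B`). -/
def GroupHyp (A B : SL2) : Prop :=
  ∃ C > (0:ℝ), ∃ τ > (0:ℝ), ∀ g : FreeGroup Bool, g ≠ 1 →
    opNorm ((FreeGroup.lift (fun b => if b then A else B) g : SL2) :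
        Matrix (Fin 2) (Fin 2) ℝ) ≥
      C * Real.exp (τ * (FreeGroup.toWord g).length)

/-- `M` has finitely many connected components, and distinct components have
disjoint closures. -/
def FinCompDisjClosures (M : Set P1) : Prop :=
  {C : Set P1 | ∃ x ∈ M, C = connectedComponentIn M x}.Finite ∧
    ∀ x ∈ M, ∀ y ∈ M, connectedComponentIn M x ≠ connectedComponentIn M y →
      closure (connectedComponentIn M x) ∩ closure (connectedComponentIn M y) = ∅

end

/-- The subset of `H_id` with `tr A > 2`, `tr B > 2`, `tr AB < −2`. -/
def Spos : Set (SL2 × SL2) :=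
  {p | 2 < trace2 p.1 ∧ 2 < trace2 p.2 ∧ trace2 (p.1 * p.2) < -2}

/-! ### The invariant -/

/-- The lower-left entry of `(tr B) A + (tr A) B`. Its sign distinguishes a pair with
`tr A · tr B · tr AB < 0` from its mirror image. -/
def orient (p : SL2 × SL2) : ℝ :=
  trace2 p.2 * p.1 1 0 + trace2 p.1 * p.2 1 0

lemma trace2_eq (A : SL2) : trace2 A = A 0 0 + A 1 1 := by
  simp [trace2, Matrix.trace_fin_two]

lemma trace2_mul (A B : SL2) : trace2 (A * B) =
    A 0 0 * B 0 0 + A 0 1 * B 1 0 + (A 1 0 * B 0 1 + A 1 1 * B 1 1) := by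
  rw [trace2_eq, Matrix.SpecialLinearGroup.coe_mul]
  simp [Matrix.mul_apply, Fin.sum_univ_two]

lemma det_entries (A : SL2) : A 0 0 * A 1 1 - A 0 1 * A 1 0 = 1 := by
  have := A.det_coe
  rwa [Matrix.det_fin_two] at this

/-- The value at `(C, S)` of the quadratic form `v ↦ det (v, A v)`. -/
def form (A : SL2) (C S : ℝ) : ℝ :=
  A 1 0 * C ^ 2 + (A 1 1 - A 0 0) * C * S - A 0 1 * S ^ 2

/-- The form `v ↦ det (v, M v)`, `M = (tr B) A + (tr A) B`, has discriminant
`-4 (x² + y² - x y z)` where `x, y, z` are the traces of `A`, `B`, `AB`. When `x y z < 0` it is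
therefore definite, and its value at `(C, S)` has the sign of its value `orient p` at `(1, 0)`. -/
lemma orient_mul_form_pos (p : SL2 × SL2) (C S : ℝ) (hv : C ^ 2 + S ^ 2 = 1)
    (h : trace2 p.1 * trace2 p.2 * trace2 (p.1 * p.2) < 0) :
    0 < orient p * (trace2 p.2 * form p.1 C S + trace2 p.1 * form p.2 C S) := by
  obtain ⟨A, B⟩ := p
  have hx : trace2 A ≠ 0 := by
    intro h0
    simp [h0] at h
  have hA := det_entries A
  have hB := det_entries B
  simp only [orient, form] at *
  rw [trace2_mul] at h
  rw [trace2_eq A] at *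
  rw [trace2_eq B] at *
  generalize A 0 0 = a at *
  generalize A 0 1 = b at *
  generalize A 1 0 = c at *
  generalize A 1 1 = d at *
  generalize B 0 0 = e at *
  generalize B 0 1 = f at *
  generalize B 1 0 = g at *
  generalize B 1 1 = k at *
  obtain ⟨P, hP⟩ : ∃ P, P = ((e + k) * (a - d) + (a + d) * (e - k)) / 2 := ⟨_, rfl⟩
  obtain ⟨q, hq⟩ : ∃ q, q = (e + k) * b + (a + d) * f := ⟨_, rfl⟩
  obtain ⟨φ, hφ⟩ : ∃ φ, φ = (e + k) * c + (a + d) * g := ⟨_, rfl⟩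
  have hD : -P ^ 2 - q * φ = (a + d) ^ 2 + (e + k) ^ 2
      - (a + d) * (e + k) * (a * e + b * g + (c * f + d * k)) := by
    rw [hP, hq, hφ]
    linear_combination (e + k) ^ 2 * hA + (a + d) ^ 2 * hB
  have hDpos : 0 < -P ^ 2 - q * φ := by
    rw [hD]
    have := sq_pos_of_ne_zero hx
    nlinarith [sq_nonneg (e + k)]
  -- Completing the square.
  have key : φ * ((e + k) * (c * C ^ 2 + (d - a) * C * S - b * S ^ 2)
      + (a + d) * (g * C ^ 2 + (k - e) * C * S - f * S ^ 2))
      = (φ * C - P * S) ^ 2 + (-P ^ 2 - q * φ) * S ^ 2 := by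
    rw [hP, hq, hφ]
    ring
  rw [← hφ, key]
  have hφ0 : φ ≠ 0 := by
    intro h0
    rw [h0] at hDpos
    nlinarith [sq_nonneg P]
  by_cases hS : S = 0
  · subst hS
    have hC : C ≠ 0 := by
      rintro rfl
      norm_num at hv
    have := sq_pos_of_ne_zero (mul_ne_zero hφ0 hC)
    simpa using this
  · have := mul_pos hDpos (sq_pos_of_ne_zero hS)
    positivity

lemma orient_ne_zero (p : SL2 × SL2)
    (h : trace2 p.1 * trace2 p.2 * trace2 (p.1 * p.2) < 0) : orient p ≠ 0 := by
  intro h0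
  have := orient_mul_form_pos p 1 0 (by norm_num) h
  simp [h0] at this

lemma continuous_entry (i j : Fin 2) : Continuous fun A : SL2 => A i j :=
  (continuous_subtype_val (p := fun A : Matrix (Fin 2) (Fin 2) ℝ => A.det = 1)).matrix_elem i j

lemma continuous_trace2_fst : Continuous fun p : SL2 × SL2 => trace2 p.1 := by
  simp only [trace2_eq]
  exact ((continuous_entry 0 0).comp continuous_fst).add
    ((continuous_entry 1 1).comp continuous_fst)

lemma continuous_trace2_snd : Continuous fun p : SL2 × SL2 => trace2 p.2 :=
  continuous_trace2_fst.comp continuous_swap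

lemma continuous_trace2_mul : Continuous fun p : SL2 × SL2 => trace2 (p.1 * p.2) := by
  simp only [trace2_mul]
  have h1 := fun i j => (continuous_entry i j).comp (continuous_fst (X := SL2) (Y := SL2))
  have h2 := fun i j => (continuous_entry i j).comp (continuous_snd (X := SL2) (Y := SL2))
  exact (((h1 0 0).mul (h2 0 0)).add ((h1 0 1).mul (h2 1 0))).add
    (((h1 1 0).mul (h2 0 1)).add ((h1 1 1).mul (h2 1 1)))

lemma continuous_orient : Continuous orient :=
  (continuous_trace2_snd.mul ((continuous_entry 1 0).comp continuous_fst)).add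
    (continuous_trace2_fst.mul ((continuous_entry 1 0).comp continuous_snd))

lemma continuous_to_SL2 {X : Type*} [TopologicalSpace X] {f : X → SL2}
    (h : ∀ i j, Continuous fun x => f x i j) : Continuous f :=
  continuous_induced_rng.2 (continuous_matrix h)

/-! ### Eight open sets -/

/-- The part of `Hid` on which `tr A`, `tr B` and `orient` have signs `ε`, `δ`, `σ`, where
`i = (ε, δ, σ)`; the sign of `tr AB` is then `-εδ`. -/
def sect (i : ℤˣ × ℤˣ × ℤˣ) : Set (SL2 × SL2) :=
  {p | 2 < ((i.1 : ℤ) : ℝ) * trace2 p.1 ∧ 2 < ((i.2.1 : ℤ) : ℝ) * trace2 p.2 ∧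
    ((i.1 : ℤ) : ℝ) * ((i.2.1 : ℤ) : ℝ) * trace2 (p.1 * p.2) < -2 ∧
    0 < ((i.2.2 : ℤ) : ℝ) * orient p}

lemma isOpen_sect (i : ℤˣ × ℤˣ × ℤˣ) : IsOpen (sect i) := by
  have h1 := continuous_trace2_fst
  have h2 := continuous_trace2_snd
  have h3 := continuous_trace2_mul
  have h4 := continuous_orient
  refine (isOpen_lt continuous_const (continuous_const.mul h1)).inter
    ((isOpen_lt continuous_const (continuous_const.mul h2)).inter
    ((isOpen_lt (continuous_const.mul h3) continuous_const).inter
    (isOpen_lt continuous_const (continuous_const.mul h4))))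

lemma closure_sect_subset (i : ℤˣ × ℤˣ × ℤˣ) : closure (sect i) ⊆
    {p | 2 ≤ ((i.1 : ℤ) : ℝ) * trace2 p.1 ∧ 2 ≤ ((i.2.1 : ℤ) : ℝ) * trace2 p.2 ∧
      ((i.1 : ℤ) : ℝ) * ((i.2.1 : ℤ) : ℝ) * trace2 (p.1 * p.2) ≤ -2 ∧
      0 ≤ ((i.2.2 : ℤ) : ℝ) * orient p} := by
  have h1 := continuous_trace2_fst
  have h2 := continuous_trace2_snd
  have h3 := continuous_trace2_mul
  have h4 := continuous_orient
  refine closure_minimal (fun p hp => ⟨hp.1.le, hp.2.1.le, hp.2.2.1.le, hp.2.2.2.le⟩) ?_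
  exact (isClosed_le continuous_const (continuous_const.mul h1)).inter
    ((isClosed_le continuous_const (continuous_const.mul h2)).inter
    ((isClosed_le (continuous_const.mul h3) continuous_const).inter
    (isClosed_le continuous_const (continuous_const.mul h4))))

lemma unit_sq (ε : ℤˣ) : ((ε : ℤ) : ℝ) * ((ε : ℤ) : ℝ) = 1 := by
  rcases Int.units_eq_one_or ε with rfl | rfl <;> norm_num

lemma trace_prod_neg {ε δ x y z : ℝ} (hε : ε * ε = 1) (hδ : δ * δ = 1)
    (hx : 2 ≤ ε * x) (hy : 2 ≤ δ * y) (hz : ε * δ * z ≤ -2) : x * y * z < 0 := by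
  have h : x * y * z = (ε * x) * (δ * y) * (ε * δ * z) := by
    linear_combination (-(x * y * z) * (δ * δ)) * hε - x * y * z * hδ
  rw [h]
  have : 0 < (ε * x) * (δ * y) := by positivity
  exact mul_neg_of_pos_of_neg this (by linarith)

lemma unit_eq_of_sign {ε ε' : ℤˣ} {t : ℝ} (ht : t ≠ 0) (h : 0 ≤ ((ε : ℤ) : ℝ) * t)
    (h' : 0 ≤ ((ε' : ℤ) : ℝ) * t) : ε = ε' := by
  rcases Int.units_eq_one_or ε with rfl | rfl <;>
    rcases Int.units_eq_one_or ε' with rfl | rfl <;> norm_num at h h' ⊢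
  · exact ht (le_antisymm h' h)
  · exact ht (le_antisymm h h')

/-- On a common limit point of `sect i` and `sect j` the invariant does not vanish, so its sign and
those of the traces determine `i` and `j`. -/
lemma disjoint_closure_sect {i j : ℤˣ × ℤˣ × ℤˣ} (hij : i ≠ j) :
    Disjoint (closure (sect i)) (closure (sect j)) := by
  rw [Set.disjoint_left]
  intro p hp hq
  apply hij
  obtain ⟨a1, a2, a3, a4⟩ := closure_sect_subset i hp
  obtain ⟨b1, b2, b3, b4⟩ := closure_sect_subset j hq
  have hneg := trace_prod_neg (unit_sq _) (unit_sq _) a1 a2 a3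
  have h1 : trace2 p.1 ≠ 0 := by
    intro h0
    simp [h0] at hneg
  have h2 : trace2 p.2 ≠ 0 := by
    intro h0
    simp [h0] at hneg
  exact Prod.ext (unit_eq_of_sign h1 (by linarith) (by linarith))
    (Prod.ext (unit_eq_of_sign h2 (by linarith) (by linarith))
      (unit_eq_of_sign (orient_ne_zero p hneg) a4 b4))

lemma exists_unit_mul_eq_abs (t : ℝ) : ∃ ε : ℤˣ, ((ε : ℤ) : ℝ) * t = |t| := by
  rcases le_total 0 t with h | h
  · exact ⟨1, by simp [abs_of_nonneg h]⟩
  · exact ⟨-1, by simp [abs_of_nonpos h]⟩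

lemma abs_eq_of_unit (ε : ℤˣ) (t : ℝ) : |t| = |((ε : ℤ) : ℝ) * t| := by
  rcases Int.units_eq_one_or ε with rfl | rfl <;> simp

lemma Hid_eq_iUnion : Hid = ⋃ i, sect i := by
  ext p
  rw [Set.mem_iUnion]
  constructor
  · rintro ⟨h1, h2, h3, h4⟩
    obtain ⟨ε, hε⟩ := exists_unit_mul_eq_abs (trace2 p.1)
    obtain ⟨δ, hδ⟩ := exists_unit_mul_eq_abs (trace2 p.2)
    obtain ⟨σ, hσ⟩ := exists_unit_mul_eq_abs (orient p)
    refine ⟨(ε, δ, σ), by simpa [hε], by simpa [hδ], ?_, ?_⟩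
    · simp only
      -- `εδz` is `±z` and has the sign of `xyz`.
      have hxy : 0 < |trace2 p.1| * |trace2 p.2| := by positivity
      have hz : ((ε : ℤ) : ℝ) * ((δ : ℤ) : ℝ) * trace2 (p.1 * p.2) < 0 := by
        by_contra hcon
        push Not at hcon
        have h5 := mul_nonneg hxy.le hcon
        rw [← hε, ← hδ] at h5
        have h6 := unit_sq ε
        have h7 := unit_sq δ
        have : trace2 p.1 * trace2 p.2 * trace2 (p.1 * p.2) =
            ((ε : ℤ) : ℝ) * trace2 p.1 * (((δ : ℤ) : ℝ) * trace2 p.2) *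
              (((ε : ℤ) : ℝ) * ((δ : ℤ) : ℝ) * trace2 (p.1 * p.2)) := by
          generalize ((ε : ℤ) : ℝ) = a at *
          generalize ((δ : ℤ) : ℝ) = b at *
          linear_combination (-(trace2 p.1 * trace2 p.2 * trace2 (p.1 * p.2)) * (b * b)) * h6
            - trace2 p.1 * trace2 p.2 * trace2 (p.1 * p.2) * h7
        linarith
      have habs := abs_eq_of_unit (ε * δ) (trace2 (p.1 * p.2))
      push_cast at habs
      rw [abs_of_neg hz] at habs
      linarith
    · simpa [hσ] using orient_ne_zero p h4
  · rintro ⟨i, h1, h2, h3, h4⟩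
    have hneg := trace_prod_neg (unit_sq _) (unit_sq _) h1.le h2.le h3.le
    refine ⟨?_, ?_, ?_, hneg⟩
    · rw [abs_eq_of_unit i.1]
      exact h1.trans_le (le_abs_self _)
    · rw [abs_eq_of_unit i.2.1]
      exact h2.trans_le (le_abs_self _)
    · rw [abs_eq_of_unit (i.1 * i.2.1)]
      push_cast
      exact lt_of_lt_of_le (by linarith) (neg_le_abs _)

lemma Spos_eq_iUnion : Spos = ⋃ σ : ℤˣ, sect (1, 1, σ) := by
  ext p
  rw [Set.mem_iUnion]
  constructor
  · rintro ⟨h1, h2, h3⟩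
    obtain ⟨σ, hσ⟩ := exists_unit_mul_eq_abs (orient p)
    have hneg : trace2 p.1 * trace2 p.2 * trace2 (p.1 * p.2) < 0 :=
      trace_prod_neg (ε := 1) (δ := 1) (by norm_num) (by norm_num) (by linarith) (by linarith)
        (by linarith)
    exact ⟨σ, by simpa using h1, by simpa using h2, by simpa using h3,
      by simpa [hσ] using orient_ne_zero p hneg⟩
  · rintro ⟨σ, h1, h2, h3, -⟩
    exact ⟨by simpa using h1, by simpa using h2, by simpa using h3⟩

/-! ### Symmetries -/

/-- Conjugation by `diag(1, -1)`. -/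
def conjRefl (A : SL2) : SL2 :=
  ⟨!![A 0 0, -A 0 1; -A 1 0, A 1 1], by
    rw [Matrix.det_fin_two_of]
    linear_combination det_entries A⟩

lemma conjRefl_entries (A : SL2) :
    (conjRefl A : Matrix (Fin 2) (Fin 2) ℝ) = !![A 0 0, -A 0 1; -A 1 0, A 1 1] := rfl

/-- Conjugation of both members of a pair by `diag(1, -1)`. -/
def mirror (p : SL2 × SL2) : SL2 × SL2 := (conjRefl p.1, conjRefl p.2)

/-- `(A, B) ↦ (-A, B)`. -/
def negFst (p : SL2 × SL2) : SL2 × SL2 := (-p.1, p.2)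

/-- `(A, B) ↦ (A, -B)`. -/
def negSnd (p : SL2 × SL2) : SL2 × SL2 := (p.1, -p.2)

lemma trace2_neg (A : SL2) : trace2 (-A) = -trace2 A := by
  simp [trace2]

lemma trace2_conjRefl (A : SL2) : trace2 (conjRefl A) = trace2 A := by
  simp [trace2_eq, conjRefl_entries]

lemma continuous_conjRefl : Continuous conjRefl := by
  refine continuous_to_SL2 fun i j => ?_
  fin_cases i <;> fin_cases j
  · exact continuous_entry 0 0
  · exact (continuous_entry 0 1).neg
  · exact (continuous_entry 1 0).neg
  · exact continuous_entry 1 1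

lemma continuous_neg_SL2 : Continuous fun A : SL2 => -A := by
  refine continuous_to_SL2 fun i j => ?_
  exact (continuous_entry i j).neg

lemma mirror_mem {ε δ σ : ℤˣ} {p : SL2 × SL2} (hp : p ∈ sect (ε, δ, σ)) :
    mirror p ∈ sect (ε, δ, -σ) := by
  obtain ⟨h1, h2, h3, h4⟩ := hp
  have e : orient (mirror p) = -orient p := by
    simp only [orient, mirror, trace2_conjRefl]
    simp [conjRefl_entries]
    ring
  have e' : trace2 ((mirror p).1 * (mirror p).2) = trace2 (p.1 * p.2) := by
    rw [trace2_mul, trace2_mul]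
    simp [mirror, conjRefl_entries]
  refine ⟨?_, ?_, ?_, ?_⟩
  · simpa [mirror, trace2_conjRefl] using h1
  · simpa [mirror, trace2_conjRefl] using h2
  · rw [e']
    exact h3
  · rw [e]
    simpa using h4

lemma negFst_mem {ε δ σ : ℤˣ} {p : SL2 × SL2} (hp : p ∈ sect (ε, δ, σ)) :
    negFst p ∈ sect (-ε, δ, -σ) := by
  obtain ⟨h1, h2, h3, h4⟩ := hp
  have e : orient (negFst p) = -orient p := by
    simp only [orient, negFst, trace2_neg]
    simp
    ring
  refine ⟨?_, ?_, ?_, ?_⟩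
  · simpa [negFst, trace2_neg] using h1
  · simpa [negFst] using h2
  · simpa [negFst, trace2_neg] using h3
  · rw [e]
    simpa using h4

lemma negSnd_mem {ε δ σ : ℤˣ} {p : SL2 × SL2} (hp : p ∈ sect (ε, δ, σ)) :
    negSnd p ∈ sect (ε, -δ, -σ) := by
  obtain ⟨h1, h2, h3, h4⟩ := hp
  have e : orient (negSnd p) = -orient p := by
    simp only [orient, negSnd, trace2_neg]
    simp
    ring
  refine ⟨?_, ?_, ?_, ?_⟩
  · simpa [negSnd] using h1
  · simpa [negSnd, trace2_neg] using h2
  · simpa [negSnd, trace2_neg] using h3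
  · rw [e]
    simpa using h4

lemma mirror_mirror (p : SL2 × SL2) : mirror (mirror p) = p := by
  refine Prod.ext (Subtype.ext ?_) (Subtype.ext ?_) <;>
  · ext i j
    fin_cases i <;> fin_cases j <;> simp [mirror, conjRefl_entries]

lemma IsConnected.of_involution {X : Type*} [TopologicalSpace X] {f : X → X}
    (hf : Continuous f) (hff : ∀ x, f (f x) = x) {S T : Set X} (hS : IsConnected S)
    (hST : ∀ x ∈ S, f x ∈ T) (hTS : ∀ x ∈ T, f x ∈ S) : IsConnected T := by
  have : f '' S = T := by
    ext y
    constructor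
    · rintro ⟨x, hx, rfl⟩
      exact hST x hx
    · exact fun hy => ⟨f y, hTS y hy, hff y⟩
  rw [← this]
  exact hS.image f hf.continuousOn

lemma isConnected_sect_of_base (h : IsConnected (sect (1, 1, 1))) (i : ℤˣ × ℤˣ × ℤˣ) :
    IsConnected (sect i) := by
  have hm : ∀ ε δ σ, IsConnected (sect (ε, δ, σ)) → IsConnected (sect (ε, δ, -σ)) := by
    intro ε δ σ h
    refine h.of_involution (f := mirror) ?_ mirror_mirror (fun p hp => mirror_mem hp) ?_
    · exact (continuous_conjRefl.comp continuous_fst).prodMk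
        (continuous_conjRefl.comp continuous_snd)
    · intro p hp
      simpa using mirror_mem hp
  have h1 : ∀ ε δ σ, IsConnected (sect (ε, δ, σ)) → IsConnected (sect (-ε, δ, -σ)) := by
    intro ε δ σ h
    refine h.of_involution (f := negFst) ?_ (fun p => by simp [negFst])
      (fun p hp => negFst_mem hp) ?_
    · exact (continuous_neg_SL2.comp continuous_fst).prodMk continuous_snd
    · intro p hp
      simpa using negFst_mem hp
  have h2 : ∀ ε δ σ, IsConnected (sect (ε, δ, σ)) → IsConnected (sect (ε, -δ, -σ)) := by
    intro ε δ σ h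
    refine h.of_involution (f := negSnd) ?_ (fun p => by simp [negSnd])
      (fun p hp => negSnd_mem hp) ?_
    · exact continuous_fst.prodMk (continuous_neg_SL2.comp continuous_snd)
    · intro p hp
      simpa using negSnd_mem hp
  have hσ : ∀ ε δ, IsConnected (sect (ε, δ, 1)) → ∀ σ, IsConnected (sect (ε, δ, σ)) := by
    intro ε δ h σ
    rcases Int.units_eq_one_or σ with rfl | rfl
    · exact h
    · exact hm _ _ _ h
  have hδ : ∀ ε, IsConnected (sect (ε, 1, 1)) → ∀ δ, IsConnected (sect (ε, δ, 1)) := by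
    intro ε h δ
    rcases Int.units_eq_one_or δ with rfl | rfl
    · exact h
    · simpa using hm _ _ _ (h2 _ _ _ h)
  have hε : ∀ ε, IsConnected (sect (ε, 1, 1)) := by
    intro ε
    rcases Int.units_eq_one_or ε with rfl | rfl
    · exact h
    · simpa using hm _ _ _ (h1 _ _ _ h)
  exact hσ _ _ (hδ _ (hε _) _) _

/-! ### A parametrization of one of the sets -/

/-- The rotation by `θ`. -/
noncomputable def rot (θ : ℝ) : SL2 :=
  ⟨!![Real.cos θ, -Real.sin θ; Real.sin θ, Real.cos θ], by
    rw [Matrix.det_fin_two_of]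
    linear_combination Real.cos_sq_add_sin_sq θ⟩

lemma rot_coe (θ : ℝ) : (rot θ : Matrix (Fin 2) (Fin 2) ℝ) =
    !![Real.cos θ, -Real.sin θ; Real.sin θ, Real.cos θ] := rfl

/-- The matrix with rows `(l, u)` and `(0, 1/l)`, where `l = 1 + eᵗ > 1`. -/
noncomputable def upper (t u : ℝ) : SL2 :=
  ⟨!![1 + Real.exp t, u; 0, (1 + Real.exp t)⁻¹], by
    have : 1 + Real.exp t ≠ 0 := by positivity
    rw [Matrix.det_fin_two_of, mul_inv_cancel₀ this]
    ring⟩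

lemma upper_coe (t u : ℝ) : (upper t u : Matrix (Fin 2) (Fin 2) ℝ) =
    !![1 + Real.exp t, u; 0, (1 + Real.exp t)⁻¹] := rfl

/-- The upper-left entry of the matrix `B` with trace `y`, lower-left entry `s` and
`tr (upper t u * B) = z`. -/
noncomputable def diagEntry (t u y z s : ℝ) : ℝ :=
  (z - u * s - y * (1 + Real.exp t)⁻¹) / ((1 + Real.exp t) - (1 + Real.exp t)⁻¹)

/-- The matrix with determinant `1`, diagonal `(e, y - e)` and lower-left entry `exp r`. -/
noncomputable def lowerPos (e y r : ℝ) : SL2 :=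
  ⟨!![e, (e * (y - e) - 1) / Real.exp r; Real.exp r, y - e], by
    rw [Matrix.det_fin_two_of, div_mul_cancel₀ _ (Real.exp_ne_zero r)]
    ring⟩

lemma lowerPos_coe (e y r : ℝ) : (lowerPos e y r : Matrix (Fin 2) (Fin 2) ℝ) =
    !![e, (e * (y - e) - 1) / Real.exp r; Real.exp r, y - e] := rfl

/-- The parametrization of `sect (1, 1, 1)` by `w = (θ, t, u, m, n, r)`: a rotation by `θ` conjugates
the pair whose first matrix is `upper t u` and whose second one has trace `2 + eᵐ`, lower-left
entry `eʳ`, and product of trace `-2 - eⁿ` with the first one. -/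
noncomputable def param (w : Fin 6 → ℝ) : SL2 × SL2 :=
  (rot (w 0) * upper (w 1) (w 2) * (rot (w 0))⁻¹,
   rot (w 0) * lowerPos (diagEntry (w 1) (w 2) (2 + Real.exp (w 3)) (-2 - Real.exp (w 4))
      (Real.exp (w 5))) (2 + Real.exp (w 3)) (w 5) * (rot (w 0))⁻¹)

lemma one_add_exp_sub_inv_pos (t : ℝ) : 0 < (1 + Real.exp t) - (1 + Real.exp t)⁻¹ := by
  have h := Real.exp_pos t
  have : (1 + Real.exp t)⁻¹ < 1 := inv_lt_one_of_one_lt₀ (by linarith)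
  linarith

lemma continuous_SL2_mul : Continuous fun p : SL2 × SL2 => p.1 * p.2 := by
  refine continuous_to_SL2 fun i j => ?_
  simp only [Matrix.SpecialLinearGroup.coe_mul, Matrix.mul_apply, Fin.sum_univ_two]
  have h1 := fun i j => (continuous_entry i j).comp (continuous_fst (X := SL2) (Y := SL2))
  have h2 := fun i j => (continuous_entry i j).comp (continuous_snd (X := SL2) (Y := SL2))
  exact ((h1 i 0).mul (h2 0 j)).add ((h1 i 1).mul (h2 1 j))

lemma continuous_SL2_inv : Continuous fun A : SL2 => A⁻¹ := by
  refine continuous_to_SL2 fun i j => ?_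
  simp only [Matrix.SpecialLinearGroup.coe_inv, Matrix.adjugate_fin_two]
  fin_cases i <;> fin_cases j
  · exact continuous_entry 1 1
  · exact (continuous_entry 0 1).neg
  · exact (continuous_entry 1 0).neg
  · exact continuous_entry 0 0

lemma continuous_param : Continuous param := by
  have hr : Continuous fun w : Fin 6 → ℝ => rot (w 0) := by
    refine continuous_to_SL2 fun i j => ?_
    fin_cases i <;> fin_cases j <;> simp [rot_coe] <;> fun_prop
  have hu : Continuous fun w : Fin 6 → ℝ => upper (w 1) (w 2) := by
    refine continuous_to_SL2 fun i j => ?_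
    have h0 : ∀ w : Fin 6 → ℝ, 1 + Real.exp (w 1) ≠ 0 := fun w => by positivity
    fin_cases i <;> fin_cases j <;> simp [upper_coe] <;> fun_prop (disch := assumption)
  have hd : Continuous fun w : Fin 6 → ℝ => diagEntry (w 1) (w 2) (2 + Real.exp (w 3))
      (-2 - Real.exp (w 4)) (Real.exp (w 5)) := by
    have h0 : ∀ w : Fin 6 → ℝ, 1 + Real.exp (w 1) ≠ 0 := fun w => by positivity
    have h1 : ∀ w : Fin 6 → ℝ, (1 + Real.exp (w 1)) - (1 + Real.exp (w 1))⁻¹ ≠ 0 :=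
      fun w => (one_add_exp_sub_inv_pos _).ne'
    unfold diagEntry
    fun_prop (disch := assumption)
  have hl : Continuous fun w : Fin 6 → ℝ => lowerPos (diagEntry (w 1) (w 2)
      (2 + Real.exp (w 3)) (-2 - Real.exp (w 4)) (Real.exp (w 5))) (2 + Real.exp (w 3)) (w 5) := by
    refine continuous_to_SL2 fun i j => ?_
    have h0 : ∀ w : Fin 6 → ℝ, Real.exp (w 5) ≠ 0 := fun w => Real.exp_ne_zero _
    fin_cases i <;> fin_cases j <;> simp [lowerPos_coe] <;> fun_prop (disch := assumption)
  have hri := continuous_SL2_inv.comp hr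
  exact (continuous_SL2_mul.comp ((continuous_SL2_mul.comp (hr.prodMk hu)).prodMk hri)).prodMk
    (continuous_SL2_mul.comp ((continuous_SL2_mul.comp (hr.prodMk hl)).prodMk hri))

lemma trace2_conj (g A : SL2) : trace2 (g * A * g⁻¹) = trace2 A := by
  unfold trace2
  rw [Matrix.SpecialLinearGroup.coe_mul, Matrix.trace_mul_comm, ← Matrix.SpecialLinearGroup.coe_mul,
    inv_mul_cancel_left]

/-- Evaluating the form of a conjugate at the rotated first basis vector. -/
lemma form_rot (θ : ℝ) (A : SL2) :
    form (rot θ * A * (rot θ)⁻¹) (Real.cos θ) (Real.sin θ) = A 1 0 := by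
  have h := Real.cos_sq_add_sin_sq θ
  simp only [form, rot_coe, Matrix.SpecialLinearGroup.coe_mul, Matrix.SpecialLinearGroup.coe_inv,
    Matrix.adjugate_fin_two, Matrix.mul_apply, Fin.sum_univ_two]
  simp
  generalize Real.cos θ = C at *
  generalize Real.sin θ = S at *
  have h' : (C ^ 2 + S ^ 2) ^ 2 = 1 := by rw [h]; norm_num
  linear_combination (A 1 0) * h'

/-- For a pair whose first matrix is triangular after a rotation, the sign of `orient` can be read
off the lower-left entry of the rotated second matrix. -/
lemma orient_pos_iff (θ : ℝ) (U V : SL2) (hU : U 1 0 = 0) (hx : 0 < trace2 U)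
    (h : trace2 U * trace2 V * trace2 (U * V) < 0) :
    0 < orient (rot θ * U * (rot θ)⁻¹, rot θ * V * (rot θ)⁻¹) ↔ 0 < V 1 0 := by
  have hprod : rot θ * U * (rot θ)⁻¹ * (rot θ * V * (rot θ)⁻¹) = rot θ * (U * V) * (rot θ)⁻¹ := by
    group
  have := orient_mul_form_pos (rot θ * U * (rot θ)⁻¹, rot θ * V * (rot θ)⁻¹) (Real.cos θ)
    (Real.sin θ) (Real.cos_sq_add_sin_sq θ) (by simpa only [hprod, trace2_conj] using h)
  simp only [form_rot, hU, trace2_conj, mul_zero, zero_add] at this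
  constructor
  · intro h0
    exact pos_of_mul_pos_right (pos_of_mul_pos_right this h0.le) hx.le
  · intro h0
    exact pos_of_mul_pos_left this (mul_pos hx h0).le

lemma param_mem (w : Fin 6 → ℝ) : param w ∈ sect (1, 1, 1) := by
  set U := upper (w 1) (w 2) with hU
  set V := lowerPos (diagEntry (w 1) (w 2) (2 + Real.exp (w 3)) (-2 - Real.exp (w 4))
      (Real.exp (w 5))) (2 + Real.exp (w 3)) (w 5) with hV
  have hx : 2 < trace2 U := by
    have h1 := Real.exp_pos (w 1)
    have h2 : trace2 U = (1 + Real.exp (w 1)) + (1 + Real.exp (w 1))⁻¹ := by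
      simp [trace2_eq, hU, upper_coe]
    have h3 : 0 < 1 + Real.exp (w 1) := by linarith
    have h4 : (1 + Real.exp (w 1)) + (1 + Real.exp (w 1))⁻¹ - 2
        = Real.exp (w 1) ^ 2 * (1 + Real.exp (w 1))⁻¹ := by
      field_simp
      ring
    have h5 : 0 < Real.exp (w 1) ^ 2 * (1 + Real.exp (w 1))⁻¹ := by positivity
    linarith
  have hy : 2 < trace2 V := by
    have : trace2 V = 2 + Real.exp (w 3) := by
      simp [trace2_eq, hV, lowerPos_coe]
    have := Real.exp_pos (w 3)
    linarith
  have hz : trace2 (U * V) < -2 := by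
    have : trace2 (U * V) = -2 - Real.exp (w 4) := by
      have h0 := (one_add_exp_sub_inv_pos (w 1)).ne'
      have h1 : diagEntry (w 1) (w 2) (2 + Real.exp (w 3)) (-2 - Real.exp (w 4)) (Real.exp (w 5))
          * ((1 + Real.exp (w 1)) - (1 + Real.exp (w 1))⁻¹) = -2 - Real.exp (w 4)
          - w 2 * Real.exp (w 5) - (2 + Real.exp (w 3)) * (1 + Real.exp (w 1))⁻¹ :=
        div_mul_cancel₀ _ h0
      rw [trace2_mul]
      simp [hU, hV, upper_coe, lowerPos_coe]
      linear_combination h1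
    have := Real.exp_pos (w 4)
    linarith
  have hneg : trace2 U * trace2 V * trace2 (U * V) < 0 :=
    mul_neg_of_pos_of_neg (by positivity) (by linarith)
  have hprod : (param w).1 * (param w).2 = rot (w 0) * (U * V) * (rot (w 0))⁻¹ := by
    simp only [param, ← hU, ← hV]
    group
  have ho := (orient_pos_iff (w 0) U V (by simp [hU, upper_coe]) (by linarith) hneg).2
    (by simpa [hV, lowerPos] using Real.exp_pos (w 5))
  refine ⟨?_, ?_, ?_, ?_⟩
  · simpa [param, trace2_conj] using hx
  · simpa [param, trace2_conj] using hy
  · rw [hprod, trace2_conj]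
    simpa using hz
  · simpa [param] using ho

/-- A matrix with trace greater than `2` is a rotated upper triangular matrix with upper-left
entry greater than `1`. -/
lemma exists_rot_upper (A : SL2) (h : 2 < trace2 A) :
    ∃ θ t u, A = rot θ * upper t u * (rot θ)⁻¹ := by
  set l := (trace2 A + √(trace2 A ^ 2 - 4)) / 2 with hl
  have hs : √(trace2 A ^ 2 - 4) ^ 2 = trace2 A ^ 2 - 4 := Real.sq_sqrt (by nlinarith)
  have hl1 : 1 < l := by
    have := Real.sqrt_nonneg (trace2 A ^ 2 - 4)
    linarith
  have hroot : l ^ 2 - trace2 A * l + 1 = 0 := by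
    rw [hl]
    linear_combination hs / 4
  have hdet : ((A : Matrix (Fin 2) (Fin 2) ℝ) - l • 1).det = 0 := by
    rw [Matrix.det_fin_two]
    simp
    rw [trace2_eq] at hroot
    linear_combination hroot + det_entries A
  obtain ⟨v, hv0, hv⟩ := Matrix.exists_mulVec_eq_zero_iff.2 hdet
  have e0 : A 0 0 * v 0 + A 0 1 * v 1 = l * v 0 := by
    have := congrFun hv 0
    simp [Matrix.mulVec, dotProduct, Fin.sum_univ_two] at this
    linarith
  have e1 : A 1 0 * v 0 + A 1 1 * v 1 = l * v 1 := by
    have := congrFun hv 1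
    simp [Matrix.mulVec, dotProduct, Fin.sum_univ_two] at this
    linarith
  obtain ⟨θ, ρ, hρ, hc, hsn⟩ : ∃ θ ρ : ℝ, ρ ≠ 0 ∧ v 0 = ρ * Real.cos θ ∧ v 1 = ρ * Real.sin θ := by
    refine ⟨Complex.arg ⟨v 0, v 1⟩, ‖(⟨v 0, v 1⟩ : ℂ)‖, ?_, ?_, ?_⟩
    · rw [norm_ne_zero_iff]
      intro h0
      apply hv0
      ext i
      fin_cases i
      · exact congrArg Complex.re h0
      · exact congrArg Complex.im h0
    · rw [Complex.norm_mul_cos_arg]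
    · rw [Complex.norm_mul_sin_arg]
  have f0 : A 0 0 * Real.cos θ + A 0 1 * Real.sin θ = l * Real.cos θ := by
    apply mul_left_cancel₀ hρ
    rw [hc, hsn] at e0
    linear_combination e0
  have f1 : A 1 0 * Real.cos θ + A 1 1 * Real.sin θ = l * Real.sin θ := by
    apply mul_left_cancel₀ hρ
    rw [hc, hsn] at e1
    linear_combination e1
  set U : SL2 := (rot θ)⁻¹ * A * rot θ with hU
  have hAU : A = rot θ * U * (rot θ)⁻¹ := by
    rw [hU]
    group
  have hcs := Real.cos_sq_add_sin_sq θ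
  have u00 : U 0 0 = l := by
    simp only [hU, rot_coe, Matrix.SpecialLinearGroup.coe_mul, Matrix.SpecialLinearGroup.coe_inv,
      Matrix.adjugate_fin_two, Matrix.mul_apply, Fin.sum_univ_two]
    simp
    linear_combination Real.cos θ * f0 + Real.sin θ * f1 + l * hcs
  have u10 : U 1 0 = 0 := by
    simp only [hU, rot_coe, Matrix.SpecialLinearGroup.coe_mul, Matrix.SpecialLinearGroup.coe_inv,
      Matrix.adjugate_fin_two, Matrix.mul_apply, Fin.sum_univ_two]
    simp
    linear_combination Real.cos θ * f1 - Real.sin θ * f0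
  have hexp : 1 + Real.exp (Real.log (l - 1)) = l := by
    rw [Real.exp_log (by linarith)]
    ring
  refine ⟨θ, Real.log (l - 1), U 0 1, ?_⟩
  rw [hAU]
  congr 2
  refine Subtype.ext ?_
  have u11 : U 1 1 = l⁻¹ := by
    have := det_entries U
    rw [u00, u10, mul_zero, sub_zero] at this
    exact eq_inv_of_mul_eq_one_right this
  ext i j
  fin_cases i <;> fin_cases j <;> simp [upper_coe, hexp, u00, u10, u11]

lemma exists_param {p : SL2 × SL2} (hp : p ∈ sect (1, 1, 1)) : ∃ w, param w = p := by
  obtain ⟨A, B⟩ := p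
  obtain ⟨h1, h2, h3, h4⟩ := hp
  simp only [Units.val_one, Int.cast_one, one_mul] at h1 h2 h3 h4
  obtain ⟨θ, t, u, rfl⟩ := exists_rot_upper A h1
  obtain ⟨V, rfl⟩ : ∃ V, B = rot θ * V * (rot θ)⁻¹ := ⟨(rot θ)⁻¹ * B * rot θ, by group⟩
  have hprod : rot θ * upper t u * (rot θ)⁻¹ * (rot θ * V * (rot θ)⁻¹)
      = rot θ * (upper t u * V) * (rot θ)⁻¹ := by
    group
  rw [hprod] at h3
  rw [trace2_conj] at h1 h2 h3
  have hneg : trace2 (upper t u) * trace2 V * trace2 (upper t u * V) < 0 :=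
    mul_neg_of_pos_of_neg (by positivity) (by linarith)
  have hs := (orient_pos_iff θ (upper t u) V (by simp [upper_coe]) (by linarith) hneg).1 h4
  refine ⟨![θ, t, u, Real.log (trace2 V - 2), Real.log (-2 - trace2 (upper t u * V)),
    Real.log (V 1 0)], ?_⟩
  have hm : 2 + Real.exp (Real.log (trace2 V - 2)) = trace2 V := by
    rw [Real.exp_log (by linarith)]
    ring
  have hn : -2 - Real.exp (Real.log (-2 - trace2 (upper t u * V))) = trace2 (upper t u * V) := by
    rw [Real.exp_log (by linarith)]
    ring
  have hr : Real.exp (Real.log (V 1 0)) = V 1 0 := Real.exp_log hs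
  have hd : diagEntry t u (trace2 V) (trace2 (upper t u * V)) (V 1 0) = V 0 0 := by
    unfold diagEntry
    rw [div_eq_iff (one_add_exp_sub_inv_pos t).ne', trace2_mul, trace2_eq]
    simp [upper_coe]
    ring
  have hV : lowerPos (V 0 0) (trace2 V) (Real.log (V 1 0)) = V := by
    refine Subtype.ext ?_
    have h01 : (V 0 0 * V 1 1 - 1) / V 1 0 = V 0 1 := by
      rw [div_eq_iff hs.ne']
      linear_combination det_entries V
    ext i j
    fin_cases i <;> fin_cases j <;> simp [lowerPos_coe, hr, trace2_eq, h01]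
  have w0 : ∀ a b c d e f : ℝ, param ![a, b, c, d, e, f] = (rot a * upper b c * (rot a)⁻¹,
      rot a * lowerPos (diagEntry b c (2 + Real.exp d) (-2 - Real.exp e) (Real.exp f))
        (2 + Real.exp d) f * (rot a)⁻¹) := fun _ _ _ _ _ _ => rfl
  rw [w0, hm, hn, hr, hd, hV]

lemma isConnected_sect (i : ℤˣ × ℤˣ × ℤˣ) : IsConnected (sect i) := by
  refine isConnected_sect_of_base ?_ i
  have : Set.range param = sect (1, 1, 1) :=
    Set.Subset.antisymm (Set.range_subset_iff.2 param_mem) fun p hp => exists_param hp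
  rw [← this]
  exact isConnected_range continuous_param

/-! ### Components of a disjoint union of open connected sets -/

section Components

variable {X ι : Type*} [TopologicalSpace X] {T : ι → Set X} {S : Set X}

lemma connectedComponentIn_eq_of_iUnion (hS : S = ⋃ i, T i) (ho : ∀ i, IsOpen (T i))
    (hc : ∀ i, IsConnected (T i)) (hd : Pairwise fun i j => Disjoint (T i) (T j))
    {i : ι} {p : X} (hp : p ∈ T i) : connectedComponentIn S p = T i := by
  have hsub : T i ⊆ S := hS ▸ Set.subset_iUnion T i
  apply Set.Subset.antisymm
  · refine isPreconnected_connectedComponentIn.subset_left_of_subset_union (ho i)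
      (v := ⋃ j ∈ {j | j ≠ i}, T j) (isOpen_biUnion fun j _ => ho j) ?_ ?_
      ⟨p, mem_connectedComponentIn (hsub hp), hp⟩
    · rw [Set.disjoint_iUnion₂_right]
      exact fun j hj => hd (Ne.symm hj)
    · intro q hq
      have hqS := connectedComponentIn_subset S p hq
      rw [hS, Set.mem_iUnion] at hqS
      obtain ⟨j, hj⟩ := hqS
      by_cases hji : j = i
      · exact Or.inl (hji ▸ hj)
      · exact Or.inr (Set.mem_biUnion (x := j) hji hj)
  · exact (hc i).isPreconnected.subset_connectedComponentIn hp hsub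

lemma ncard_components_of_iUnion (hS : S = ⋃ i, T i) (ho : ∀ i, IsOpen (T i))
    (hc : ∀ i, IsConnected (T i)) (hd : Pairwise fun i j => Disjoint (T i) (T j)) :
    {C : Set X | ∃ p ∈ S, C = connectedComponentIn S p}.ncard = Nat.card ι := by
  have hr : {C : Set X | ∃ p ∈ S, C = connectedComponentIn S p} = Set.range T := by
    ext C
    constructor
    · rintro ⟨p, hp, rfl⟩
      rw [hS, Set.mem_iUnion] at hp
      obtain ⟨i, hi⟩ := hp
      exact ⟨i, (connectedComponentIn_eq_of_iUnion hS ho hc hd hi).symm⟩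
    · rintro ⟨i, rfl⟩
      obtain ⟨p, hp⟩ := (hc i).nonempty
      exact ⟨p, hS ▸ Set.mem_iUnion_of_mem i hp,
        (connectedComponentIn_eq_of_iUnion hS ho hc hd hp).symm⟩
  have hinj : Function.Injective T := by
    intro i j hij
    by_contra hne
    have h := hd hne
    simp only [hij, disjoint_self] at h
    exact (hc j).nonempty.ne_empty h
  rw [hr, ← Set.image_univ, Set.ncard_image_of_injective _ hinj, Set.ncard_univ]

end Components

/-! ### Components of `Hid` and `Spos` -/

lemma disjoint_sect : Pairwise fun i j => Disjoint (sect i) (sect j) := fun _ _ hij =>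
  (disjoint_closure_sect hij).mono subset_closure subset_closure

lemma disjoint_sect_one : Pairwise fun σ τ : ℤˣ => Disjoint (sect (1, 1, σ)) (sect (1, 1, τ)) :=
  fun _ _ h => disjoint_sect (by simpa using h)

lemma conjRefl_coe (A : SL2) : (conjRefl A : Matrix (Fin 2) (Fin 2) ℝ) =
    !![1, 0; 0, -1] * (A : Matrix (Fin 2) (Fin 2) ℝ) * (!![1, 0; 0, -1])⁻¹ := by
  have h : (!![1, 0; 0, -1] : Matrix (Fin 2) (Fin 2) ℝ)⁻¹ = !![1, 0; 0, -1] := by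
    apply Matrix.inv_eq_right_inv
    ext i j
    fin_cases i <;> fin_cases j <;> simp
  rw [h]
  ext i j
  fin_cases i <;> fin_cases j <;>
    simp [conjRefl_entries, Matrix.mul_apply, Matrix.vecMul, dotProduct]

/-- **Structure of `H_id`** (Proposition 3.5 of Avila–Bochi–Yoccoz): `H_id` has
exactly eight connected components with pairwise disjoint closures; its subset
`{tr A > 2, tr B > 2, tr AB < −2}` has exactly two connected components, which
are interchanged by conjugation by an orientation-reversing linear map. -/
theorem Hid_components :
    {C : Set (SL2 × SL2) | ∃ p ∈ Hid, C = connectedComponentIn Hid p}.ncard = 8 ∧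
    (∀ p ∈ Hid, ∀ q ∈ Hid,
      connectedComponentIn Hid p ≠ connectedComponentIn Hid q →
      closure (connectedComponentIn Hid p) ∩
        closure (connectedComponentIn Hid q) = ∅) ∧
    {C : Set (SL2 × SL2) | ∃ p ∈ Spos, C = connectedComponentIn Spos p}.ncard = 2 ∧
    ∃ G : Matrix (Fin 2) (Fin 2) ℝ, G.det < 0 ∧
      ∀ p ∈ Spos, ∃ q : SL2 × SL2, q ∈ Spos ∧
        (q.1 : Matrix (Fin 2) (Fin 2) ℝ) = G * (p.1 : Matrix (Fin 2) (Fin 2) ℝ) * G⁻¹ ∧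
        (q.2 : Matrix (Fin 2) (Fin 2) ℝ) = G * (p.2 : Matrix (Fin 2) (Fin 2) ℝ) * G⁻¹ ∧
        connectedComponentIn Spos q ≠ connectedComponentIn Spos p := by
  refine ⟨?_, ?_, ?_, !![1, 0; 0, -1], by simp [Matrix.det_fin_two_of], ?_⟩
  · rw [ncard_components_of_iUnion Hid_eq_iUnion isOpen_sect isConnected_sect disjoint_sect,
      Nat.card_eq_fintype_card]
    rfl
  · intro p hp q hq hne
    rw [Hid_eq_iUnion, Set.mem_iUnion] at hp hq
    obtain ⟨i, hi⟩ := hp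
    obtain ⟨j, hj⟩ := hq
    rw [connectedComponentIn_eq_of_iUnion Hid_eq_iUnion isOpen_sect isConnected_sect
        disjoint_sect hi,
      connectedComponentIn_eq_of_iUnion Hid_eq_iUnion isOpen_sect isConnected_sect
        disjoint_sect hj] at hne ⊢
    exact (disjoint_closure_sect fun h => hne (congrArg sect h)).inter_eq
  · rw [ncard_components_of_iUnion Spos_eq_iUnion (fun _ => isOpen_sect _)
      (fun _ => isConnected_sect _) disjoint_sect_one, Nat.card_eq_fintype_card]
    rfl
  · intro p hp
    rw [Spos_eq_iUnion, Set.mem_iUnion] at hp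
    obtain ⟨σ, hσ⟩ := hp
    have hm := mirror_mem hσ
    refine ⟨mirror p, ?_, conjRefl_coe _, conjRefl_coe _, ?_⟩
    · rw [Spos_eq_iUnion]
      exact Set.mem_iUnion_of_mem (-σ) hm
    · have hcomp : ∀ {τ : ℤˣ} {q : SL2 × SL2}, q ∈ sect (1, 1, τ) →
          connectedComponentIn Spos q = sect (1, 1, τ) := fun hq =>
        connectedComponentIn_eq_of_iUnion (T := fun τ : ℤˣ => sect (1, 1, τ)) Spos_eq_iUnion
          (fun _ => isOpen_sect _) (fun _ => isConnected_sect _) disjoint_sect_one hq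
      rw [hcomp hσ, hcomp hm]
      intro heq
      rw [heq] at hm
      have hne : -σ ≠ σ := by
        rcases Int.units_eq_one_or σ with rfl | rfl <;> decide
      exact Set.disjoint_left.1 (disjoint_sect_one hne) (heq ▸ hm) hm
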